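/- (Interpolation trace lemma for the normal derivative.) Let Ω ⊂ ℝ^d be a bounded open set with smooth boundary. There exists a constant C > 0 such that for every u ∈ H²(Ω): ∫_{∂Ω} |∂u/∂ν|² ≤ C ‖u‖_{H²(Ω)}^{3/2} ‖u‖_{L²(Ω)}^{1/2}, where ν is the outward unit normal and ∂u/∂ν = ∇u·ν is the normal derivative of the trace. -/

import Mathlib

open MeasureTheory Set

noncomputable section

namespace Micropolar

/-- partial derivative in direction `i` of a scalar function on `ℝ^d`. -/
def pd {d : ℕ} (i : Fin d) (f : (Fin d → ℝ) → ℝ) (x : Fin d → ℝ) : ℝ :=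
  fderiv ℝ f x (Pi.single i 1)

/-- gradient of a scalar function. -/
def grad {d : ℕ} (f : (Fin d → ℝ) → ℝ) (x : Fin d → ℝ) : Fin d → ℝ :=
  fun i => pd i f x

/-- divergence of a vector field. -/
def vdiv {d : ℕ} (u : (Fin d → ℝ) → (Fin d → ℝ)) (x : Fin d → ℝ) : ℝ :=
  ∑ i, pd i (fun y => u y i) x

/-- Laplacian of a scalar function. -/
def lap {d : ℕ} (f : (Fin d → ℝ) → ℝ) (x : Fin d → ℝ) : ℝ :=
  ∑ i, pd i (pd i f) x

/-- componentwise Laplacian of a vector field. -/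
def lapV {d : ℕ} (u : (Fin d → ℝ) → (Fin d → ℝ)) (x : Fin d → ℝ) : Fin d → ℝ :=
  fun j => lap (fun y => u y j) x

/-- convection term `(u · ∇) v` for vector fields. -/
def conv {d : ℕ} (u v : (Fin d → ℝ) → (Fin d → ℝ)) (x : Fin d → ℝ) : Fin d → ℝ :=
  fun j => ∑ i, u x i * pd i (fun y => v y j) x

/-- convection term `(u · ∇) f` for a scalar function. -/
def convS {d : ℕ} (u : (Fin d → ℝ) → (Fin d → ℝ)) (f : (Fin d → ℝ) → ℝ)
    (x : Fin d → ℝ) : ℝ :=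
  ∑ i, u x i * pd i f x

/-- time derivative of a time-dependent scalar function. -/
def tderiv {d : ℕ} (f : ℝ → (Fin d → ℝ) → ℝ) (t : ℝ) (x : Fin d → ℝ) : ℝ :=
  deriv (fun s => f s x) t

/-- squared euclidean norm of a vector. -/
def nsq {d : ℕ} (v : Fin d → ℝ) : ℝ := ∑ i, (v i) ^ 2

/-- squared norm of the (first) gradient of a scalar function. -/
def gnsq {d : ℕ} (f : (Fin d → ℝ) → ℝ) (x : Fin d → ℝ) : ℝ :=
  ∑ i, (pd i f x) ^ 2

/-- squared norm of the gradient of a vector field. -/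
def gnsqV {d : ℕ} (u : (Fin d → ℝ) → (Fin d → ℝ)) (x : Fin d → ℝ) : ℝ :=
  ∑ j, gnsq (fun y => u y j) x

/-- squared norm of the second derivatives of a scalar function. -/
def g2nsq {d : ℕ} (f : (Fin d → ℝ) → ℝ) (x : Fin d → ℝ) : ℝ :=
  ∑ i, ∑ j, (pd i (pd j f) x) ^ 2

/-- squared norm of the second derivatives of a vector field. -/
def g2nsqV {d : ℕ} (u : (Fin d → ℝ) → (Fin d → ℝ)) (x : Fin d → ℝ) : ℝ :=
  ∑ j, g2nsq (fun y => u y j) x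

/-- pointwise squared Sobolev `H^k` integrand of a scalar function. -/
def sobSq {d : ℕ} (k : ℕ) (f : (Fin d → ℝ) → ℝ) (x : Fin d → ℝ) : ℝ :=
  ∑ n ∈ Finset.range (k + 1), ‖iteratedFDeriv ℝ n f x‖ ^ 2

/-- pointwise squared Sobolev `H^k` integrand of a vector field. -/
def sobSqV {d : ℕ} (k : ℕ) (u : (Fin d → ℝ) → (Fin d → ℝ)) (x : Fin d → ℝ) : ℝ :=
  ∑ j, sobSq k (fun y => u y j) x

/-- curl of a three-dimensional vector field. -/
def curl3 (u : (Fin 3 → ℝ) → (Fin 3 → ℝ)) (x : Fin 3 → ℝ) : Fin 3 → ℝ :=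
  ![pd 1 (fun y => u y 2) x - pd 2 (fun y => u y 1) x,
    pd 2 (fun y => u y 0) x - pd 0 (fun y => u y 2) x,
    pd 0 (fun y => u y 1) x - pd 1 (fun y => u y 0) x]

/-- (scalar) curl of a two-dimensional vector field. -/
def curl2 (u : (Fin 2 → ℝ) → (Fin 2 → ℝ)) (x : Fin 2 → ℝ) : ℝ :=
  pd 0 (fun y => u y 1) x - pd 1 (fun y => u y 0) x

/-- `P₁` applied to a scalar function in dimension two : `(∂₂ψ, −∂₁ψ)`. -/
def P1two (ψ : (Fin 2 → ℝ) → ℝ) (x : Fin 2 → ℝ) : Fin 2 → ℝ :=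
  ![pd 1 ψ x, -(pd 0 ψ x)]

/-- `H^{-1}(Ω)` dual norm of a scalar function, computed against smooth test
functions vanishing on the boundary with `H¹`-norm at most one. -/
def Hm1norm {d : ℕ} (Ω : Set (Fin d → ℝ)) (f : (Fin d → ℝ) → ℝ) : ℝ :=
  sSup { r : ℝ | ∃ φ : (Fin d → ℝ) → ℝ, ContDiff ℝ (⊤ : ℕ∞) φ ∧
    (∀ x ∈ frontier Ω, φ x = 0) ∧ (∫ x in Ω, sobSq 1 φ x) ≤ 1 ∧
    r = ∫ x in Ω, f x * φ x }

/-- `H^{-1}(Ω)` dual norm of a vector field. -/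
def Hm1normV {d : ℕ} (Ω : Set (Fin d → ℝ)) (f : (Fin d → ℝ) → (Fin d → ℝ)) : ℝ :=
  sSup { r : ℝ | ∃ φ : (Fin d → ℝ) → (Fin d → ℝ), ContDiff ℝ (⊤ : ℕ∞) φ ∧
    (∀ x ∈ frontier Ω, φ x = 0) ∧ (∫ x in Ω, sobSqV 1 φ x) ≤ 1 ∧
    r = ∫ x in Ω, ∑ j, f x j * φ x j }

end Micropolar

open Micropolar

/-!
Along a segment of length `l` that enters `Ω` transversally from a boundary point, testing `f''`
against a Hermite cubic bounds `f'(0)²` by `72 l⁻³ ∫ f² + 2 l ∫ f''²`. Take `l = δε`, with `δ`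
depending only on `∂Ω`, and integrate over the boundary points. The projection along a direction
`v` with `Dρ(v) = 1` is antilipschitz on a small piece of `{ρ = 0}`, so by Fubini the surface
integral of the line integrals is at most a constant times a volume integral over `Ω`. Such `v`
span the whole space, hence every directional derivative is controlled, and compactness of `∂Ω`
gives `∫_{∂Ω} |∇u|² ≤ C (ε⁻³ ‖u‖²_{L²} + ε ‖u‖²_{H²})` for all `ε ∈ (0, 1]`. The choice
`ε = (‖u‖_{L²} / ‖u‖_{H²})^{1/2}` balances the two terms, and `|∂u/∂ν| ≤ |∇u|`.
-/

open Filter Topology Module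
open scoped NNReal ENNReal

section OneDimensional

-- `1 - 3 s² + 2 s³` equals `1` at `0` and vanishes at `1`, with vanishing derivative at both ends,
-- so that integrating by parts twice leaves only the boundary term `-f' 0`.
theorem intervalIntegral_zero_one_hermite {f f' f'' : ℝ → ℝ}
    (hf : ∀ s ∈ Icc (0 : ℝ) 1, HasDerivAt f (f' s) s)
    (hf' : ∀ s ∈ Icc (0 : ℝ) 1, HasDerivAt f' (f'' s) s) (hf'' : ContinuousOn f'' (Icc 0 1)) :
    ∫ s in (0 : ℝ)..1, (f'' s * (1 - 3 * s ^ 2 + 2 * s ^ 3) - f s * (12 * s - 6)) = -f' 0 := by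
  have hf_cont : ContinuousOn f (Icc 0 1) := fun s hs ↦ (hf s hs).continuousAt.continuousWithinAt
  have hp (s : ℝ) : HasDerivAt (fun s ↦ 1 - 3 * s ^ 2 + 2 * s ^ 3) (6 * s ^ 2 - 6 * s) s :=
    ((((hasDerivAt_id' s).pow 2).const_mul 3).const_sub 1).add
      (((hasDerivAt_id' s).pow 3).const_mul 2) |>.congr_deriv (by push_cast; ring)
  have hp' (s : ℝ) : HasDerivAt (fun s ↦ 6 * s ^ 2 - 6 * s) (12 * s - 6) s :=
    (((hasDerivAt_id' s).pow 2).const_mul 6).sub ((hasDerivAt_id' s).const_mul 6)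
      |>.congr_deriv (by push_cast; ring)
  rw [intervalIntegral.integral_eq_sub_of_hasDerivAt
    (f := fun s ↦ f' s * (1 - 3 * s ^ 2 + 2 * s ^ 3) - f s * (6 * s ^ 2 - 6 * s))]
  · norm_num
  · intro s hs
    rw [uIcc_of_le zero_le_one] at hs
    exact ((hf' s hs).mul (hp s)).sub ((hf s hs).mul (hp' s)) |>.congr_deriv (by ring)
  · exact ContinuousOn.intervalIntegrable_of_Icc zero_le_one (by fun_prop)

theorem sq_deriv_zero_le_intervalIntegral_zero_one {f f' f'' : ℝ → ℝ}
    (hf : ∀ s ∈ Icc (0 : ℝ) 1, HasDerivAt f (f' s) s)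
    (hf' : ∀ s ∈ Icc (0 : ℝ) 1, HasDerivAt f' (f'' s) s) (hf'' : ContinuousOn f'' (Icc 0 1)) :
    f' 0 ^ 2 ≤ ∫ s in (0 : ℝ)..1, (72 * f s ^ 2 + 2 * f'' s ^ 2) := by
  have hf_cont : ContinuousOn f (Icc 0 1) := fun s hs ↦ (hf s hs).continuousAt.continuousWithinAt
  let k : ℝ → ℝ := fun s ↦ f'' s * (1 - 3 * s ^ 2 + 2 * s ^ 3) - f s * (12 * s - 6)
  have hk : ContinuousOn k (Icc 0 1) := by fun_prop
  have jensen : (∫ s in (0 : ℝ)..1, k s) ^ 2 ≤ ∫ s in (0 : ℝ)..1, k s ^ 2 := by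
    have : IsProbabilityMeasure (volume.restrict (Ioc (0 : ℝ) 1)) := ⟨by simp⟩
    simp only [intervalIntegral.integral_of_le zero_le_one]
    exact (even_two.convexOn_pow (𝕜 := ℝ)).map_integral_le (continuous_pow 2).continuousOn
      isClosed_univ (ae_of_all _ fun _ ↦ mem_univ _)
      (hk.integrableOn_Icc.mono_set Ioc_subset_Icc_self)
      ((hk.pow 2).integrableOn_Icc.mono_set Ioc_subset_Icc_self)
  have k_sq_le : ∀ s ∈ Icc (0 : ℝ) 1, k s ^ 2 ≤ 72 * f s ^ 2 + 2 * f'' s ^ 2 := by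
    rintro s ⟨h0, h1⟩
    have cubic_nonneg : 0 ≤ 1 - 3 * s ^ 2 + 2 * s ^ 3 := by
      rw [show 1 - 3 * s ^ 2 + 2 * s ^ 3 = (1 - s) ^ 2 * (1 + 2 * s) by ring]; positivity
    have cubic_le_one : 1 - 3 * s ^ 2 + 2 * s ^ 3 ≤ 1 := by
      nlinarith [mul_nonneg (sq_nonneg s) (sub_nonneg.2 h1)]
    have linear_sq_le : (12 * s - 6) ^ 2 ≤ 36 := by nlinarith [mul_nonneg h0 (sub_nonneg.2 h1)]
    calc k s ^ 2
        ≤ 2 * ((f'' s * (1 - 3 * s ^ 2 + 2 * s ^ 3)) ^ 2 + (-(f s * (12 * s - 6))) ^ 2) := by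
          simpa only [k, sub_eq_add_neg] using add_sq_le
      _ = 2 * (f s ^ 2 * (12 * s - 6) ^ 2 + f'' s ^ 2 * (1 - 3 * s ^ 2 + 2 * s ^ 3) ^ 2) := by ring
      _ ≤ 2 * (f s ^ 2 * 36 + f'' s ^ 2 * 1) := by
          gcongr; exact pow_le_one₀ cubic_nonneg cubic_le_one
      _ = 72 * f s ^ 2 + 2 * f'' s ^ 2 := by ring
  calc f' 0 ^ 2 = (∫ s in (0 : ℝ)..1, k s) ^ 2 := by
        rw [intervalIntegral_zero_one_hermite hf hf' hf'', neg_sq]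
    _ ≤ ∫ s in (0 : ℝ)..1, k s ^ 2 := jensen
    _ ≤ ∫ s in (0 : ℝ)..1, (72 * f s ^ 2 + 2 * f'' s ^ 2) :=
        intervalIntegral.integral_mono_on zero_le_one
          ((hk.pow 2).intervalIntegrable_of_Icc zero_le_one)
          (ContinuousOn.intervalIntegrable_of_Icc zero_le_one (by fun_prop)) k_sq_le

theorem sq_deriv_zero_le_intervalIntegral {f f' f'' : ℝ → ℝ} {l : ℝ} (hl : 0 < l)
    (hf : ∀ s ∈ Icc 0 l, HasDerivAt f (f' s) s) (hf' : ∀ s ∈ Icc 0 l, HasDerivAt f' (f'' s) s)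
    (hf'' : ContinuousOn f'' (Icc 0 l)) :
    f' 0 ^ 2 ≤ ∫ s in (0 : ℝ)..l, (72 / l ^ 3 * f s ^ 2 + 2 * l * f'' s ^ 2) := by
  have mapsTo : MapsTo (l * ·) (Icc 0 1) (Icc 0 l) := fun s hs ↦
    ⟨mul_nonneg hl.le hs.1, mul_le_of_le_one_right hl.le hs.2⟩
  have scale (s : ℝ) : HasDerivAt (l * ·) l s := by simpa using (hasDerivAt_id s).const_mul l
  have unit := sq_deriv_zero_le_intervalIntegral_zero_one
    (fun s hs ↦ (hf _ (mapsTo hs)).comp s (scale s))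
    (fun s hs ↦ ((hf' _ (mapsTo hs)).comp s (scale s)).mul_const l)
    (((hf''.comp (by fun_prop) mapsTo).mul_const l).mul_const l)
  have rescale := intervalIntegral.mul_integral_comp_mul_left (a := 0) (b := 1)
    (f := fun s ↦ 72 / l ^ 3 * f s ^ 2 + 2 * l * f'' s ^ 2) (c := l)
  rw [mul_zero, mul_one] at rescale
  refine le_of_mul_le_mul_right ?_ (pow_pos hl 2)
  calc f' 0 ^ 2 * l ^ 2 = (f' (l * 0) * l) ^ 2 := by rw [mul_zero, mul_pow]
    _ ≤ ∫ s in (0 : ℝ)..1, (72 * f (l * s) ^ 2 + 2 * (f'' (l * s) * l * l) ^ 2) := unit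
    _ = (∫ s in (0 : ℝ)..l, (72 / l ^ 3 * f s ^ 2 + 2 * l * f'' s ^ 2)) * l ^ 2 := by
        rw [← rescale, ← intervalIntegral.integral_const_mul,
          ← intervalIntegral.integral_mul_const]
        congr! 2
        field_simp

end OneDimensional

section Weight

variable {E : Type*} [NormedAddCommGroup E] [NormedSpace ℝ E] {u : E → ℝ} {ε : ℝ}

/-- The weight `ε⁻³ u² + ε |D²u|²`, whose integral over a collar of thickness comparable to `ε`
controls `|∇u|²` on the boundary. -/
def interpolationWeight (ε : ℝ) (u : E → ℝ) (x : E) : ℝ :=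
  ε⁻¹ ^ 3 * u x ^ 2 + ε * ‖iteratedFDeriv ℝ 2 u x‖ ^ 2

theorem interpolationWeight_nonneg (hε : 0 ≤ ε) (u : E → ℝ) (x : E) :
    0 ≤ interpolationWeight ε u x := by
  unfold interpolationWeight; positivity

theorem continuous_interpolationWeight (hu : ContDiff ℝ 2 u) (ε : ℝ) :
    Continuous (interpolationWeight ε u) := by
  have hu_cont := hu.continuous
  have := hu.continuous_iteratedFDeriv (m := 2) le_rfl
  unfold interpolationWeight
  fun_prop

theorem sq_fderiv_fderiv_apply_le (u : E → ℝ) (x v : E) :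
    fderiv ℝ (fderiv ℝ u) x v v ^ 2 ≤ ‖v‖ ^ 4 * ‖iteratedFDeriv ℝ 2 u x‖ ^ 2 := by
  have le_opNorm := (iteratedFDeriv ℝ 2 u x).le_opNorm ![v, v]
  rw [iteratedFDeriv_two_apply, Fin.prod_univ_two] at le_opNorm
  calc fderiv ℝ (fderiv ℝ u) x v v ^ 2 = ‖fderiv ℝ (fderiv ℝ u) x v v‖ ^ 2 := (sq_abs _).symm
    _ ≤ (‖iteratedFDeriv ℝ 2 u x‖ * (‖v‖ * ‖v‖)) ^ 2 := by gcongr; exact le_opNorm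
    _ = ‖v‖ ^ 4 * ‖iteratedFDeriv ℝ 2 u x‖ ^ 2 := by ring

theorem sq_fderiv_apply_le_intervalIntegral (hu : ContDiff ℝ 2 u) (x v : E) {l : ℝ}
    (hl : 0 < l) :
    fderiv ℝ u x v ^ 2 ≤ ∫ s in (0 : ℝ)..l,
      (72 / l ^ 3 * u (x - s • v) ^ 2 + 2 * l * fderiv ℝ (fderiv ℝ u) (x - s • v) v v ^ 2) := by
  have hu' : ContDiff ℝ 1 (fderiv ℝ u) := hu.fderiv_right (by norm_num)
  have := hu'.continuous_fderiv one_ne_zero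
  have line (s : ℝ) : HasDerivAt (fun s : ℝ ↦ x - s • v) (-v) s := by
    simpa using ((hasDerivAt_id s).smul_const v).const_sub x
  have restrict (s : ℝ) :
      HasDerivAt (fun s : ℝ ↦ u (x - s • v)) (fderiv ℝ u (x - s • v) (-v)) s :=
    (hu.differentiable two_ne_zero _).hasFDerivAt.comp_hasDerivAt s (line s)
  have restrict' (s : ℝ) : HasDerivAt (fun s : ℝ ↦ fderiv ℝ u (x - s • v) (-v))
      (fderiv ℝ (fderiv ℝ u) (x - s • v) (-v) (-v)) s := by
    simpa using ((hu'.differentiable one_ne_zero _).hasFDerivAt.comp_hasDerivAt s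
      (line s)).clm_apply (hasDerivAt_const s (-v))
  simpa using sq_deriv_zero_le_intervalIntegral hl (fun s _ ↦ restrict s)
    (fun s _ ↦ restrict' s) (by fun_prop)

theorem weighted_sq_add_sq_fderiv_fderiv_le (u : E → ℝ) (x v : E) {δ : ℝ} (hδ : 0 < δ)
    (hε : 0 < ε) :
    72 / (δ * ε) ^ 3 * u x ^ 2 + 2 * (δ * ε) * fderiv ℝ (fderiv ℝ u) x v v ^ 2
      ≤ (72 / δ ^ 3 + 2 * δ * ‖v‖ ^ 4) * interpolationWeight ε u x :=
  calc _ ≤ 72 / (δ * ε) ^ 3 * u x ^ 2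
        + 2 * (δ * ε) * (‖v‖ ^ 4 * ‖iteratedFDeriv ℝ 2 u x‖ ^ 2) := by
        gcongr; exact sq_fderiv_fderiv_apply_le u x v
    _ = 72 / δ ^ 3 * (ε⁻¹ ^ 3 * u x ^ 2)
        + 2 * δ * ‖v‖ ^ 4 * (ε * ‖iteratedFDeriv ℝ 2 u x‖ ^ 2) := by field_simp
    _ ≤ 72 / δ ^ 3 * interpolationWeight ε u x
        + 2 * δ * ‖v‖ ^ 4 * interpolationWeight ε u x := by
        unfold interpolationWeight
        gcongr
        · exact le_add_of_nonneg_right (by positivity)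
        · exact le_add_of_nonneg_left (by positivity)
    _ = _ := (add_mul _ _ _).symm

theorem ofReal_sq_fderiv_apply_le_lintegral (hu : ContDiff ℝ 2 u) (x v : E) {δ : ℝ}
    (hδ : 0 < δ) (hε : 0 < ε) :
    ENNReal.ofReal (fderiv ℝ u x v ^ 2) ≤ ENNReal.ofReal (72 / δ ^ 3 + 2 * δ * ‖v‖ ^ 4) *
      ∫⁻ s in Ioc 0 (δ * ε), ENNReal.ofReal (interpolationWeight ε u (x - s • v)) := by
  have hu_cont := hu.continuous
  have hu' : ContDiff ℝ 1 (fderiv ℝ u) := hu.fderiv_right (by norm_num)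
  have := hu'.continuous_fderiv one_ne_zero
  have weight_cont : Continuous fun s : ℝ ↦ interpolationWeight ε u (x - s • v) :=
    (continuous_interpolationWeight hu ε).comp (by fun_prop)
  have real_bound : fderiv ℝ u x v ^ 2 ≤ (72 / δ ^ 3 + 2 * δ * ‖v‖ ^ 4) *
      ∫ s in (0 : ℝ)..(δ * ε), interpolationWeight ε u (x - s • v) := by
    rw [← intervalIntegral.integral_const_mul]
    exact (sq_fderiv_apply_le_intervalIntegral hu x v (by positivity)).trans <|
      intervalIntegral.integral_mono_on (by positivity)
        (Continuous.intervalIntegrable (by fun_prop) _ _)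
        ((weight_cont.const_mul _).intervalIntegrable _ _)
        fun s _ ↦ weighted_sq_add_sq_fderiv_fderiv_le u _ v hδ hε
  rw [← ofReal_integral_eq_lintegral_ofReal (weight_cont.intervalIntegrable 0 (δ * ε)).1
    (ae_of_all _ fun _ ↦ interpolationWeight_nonneg hε.le u _),
    ← intervalIntegral.integral_of_le (by positivity), ← ENNReal.ofReal_mul (by positivity)]
  exact ENNReal.ofReal_le_ofReal real_bound

theorem ofReal_sq_fderiv_apply_le_lintegral_indicator (hu : ContDiff ℝ 2 u) {Ω : Set E}
    {x v : E} {δ : ℝ} (hδ : 0 < δ) (hΩ : ∀ s ∈ Ioc 0 δ, x - s • v ∈ Ω) (hε : ε ∈ Ioc 0 1) :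
    ENNReal.ofReal (fderiv ℝ u x v ^ 2) ≤ ENNReal.ofReal (72 / δ ^ 3 + 2 * δ * ‖v‖ ^ 4) *
      ∫⁻ s : ℝ, Ω.indicator (fun y ↦ ENNReal.ofReal (interpolationWeight ε u y)) (x - s • v) := by
  let W (y : E) : ℝ≥0∞ := ENNReal.ofReal (interpolationWeight ε u y)
  refine (ofReal_sq_fderiv_apply_le_lintegral hu x v hδ hε.1).trans ?_
  gcongr ENNReal.ofReal _ * ?_
  calc ∫⁻ s in Ioc 0 (δ * ε), W (x - s • v)
      = ∫⁻ s in Ioc 0 (δ * ε), Ω.indicator W (x - s • v) :=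
        setLIntegral_congr_fun measurableSet_Ioc fun s hs ↦ (indicator_of_mem
          (hΩ s ⟨hs.1, hs.2.trans (mul_le_of_le_one_right hδ.le hε.2)⟩) W).symm
    _ ≤ ∫⁻ s : ℝ, Ω.indicator W (x - s • v) := setLIntegral_le_lintegral _ _

end Weight

section Projection

theorem map_restrict_hausdorffMeasure_le {X Y : Type*} [EMetricSpace X] [MeasurableSpace X]
    [BorelSpace X] [EMetricSpace Y] [MeasurableSpace Y] [BorelSpace Y] {π : X → Y}
    (hπ : Measurable π) {S : Set X} {K : ℝ≥0} (hK : AntilipschitzWith K (S.domRestrict π)) {r : ℝ}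
    (hr : 0 ≤ r) : (μH[r].restrict S).map π ≤ (K : ℝ≥0∞) ^ r • μH[r] := by
  refine Measure.le_iff.2 fun B hB ↦ ?_
  calc (μH[r].restrict S).map π B = μH[r] (Subtype.val '' (S.domRestrict π ⁻¹' B)) := by
        rw [Measure.map_apply hπ hB, Measure.restrict_apply (hπ hB), inter_comm,
          domRestrict_eq, preimage_comp, Subtype.image_preimage_coe]
    _ = μH[r] (S.domRestrict π ⁻¹' B) := isometry_subtype_coe.hausdorffMeasure_image (.inl hr) _
    _ ≤ ((K : ℝ≥0∞) ^ r • μH[r]) B := hK.hausdorffMeasure_preimage_le hr B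

variable {E : Type*} [NormedAddCommGroup E] [NormedSpace ℝ E] [FiniteDimensional ℝ E]
  [MeasurableSpace E] [BorelSpace E]

theorem exists_lintegral_lintegral_comp_equiv_eq {F G : Type*}
    [NormedAddCommGroup F] [NormedSpace ℝ F] [FiniteDimensional ℝ F] [MeasurableSpace F]
    [BorelSpace F] [NormedAddCommGroup G] [NormedSpace ℝ G] [FiniteDimensional ℝ G]
    [MeasurableSpace G] [BorelSpace G] (μ : Measure E) [μ.IsAddHaarMeasure]
    (ν : Measure F) [ν.IsAddHaarMeasure] (τ : Measure G) [τ.IsAddHaarMeasure]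
    (T : (F × G) ≃L[ℝ] E) :
    ∃ c : ℝ≥0, ∀ w : E → ℝ≥0∞, Measurable w →
      ∫⁻ y, (∫⁻ z, w (T (y, z)) ∂τ) ∂ν = c * ∫⁻ x, w x ∂μ := by
  have : ((ν.prod τ).map T).IsAddHaarMeasure := T.isAddHaarMeasure_map _
  have hT := T.continuous.measurable
  refine ⟨Measure.addHaarScalarFactor ((ν.prod τ).map T) μ, fun w hw ↦ ?_⟩
  calc ∫⁻ y, (∫⁻ z, w (T (y, z)) ∂τ) ∂ν = ∫⁻ z, w (T z) ∂(ν.prod τ) :=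
        (lintegral_prod (fun z ↦ w (T z)) (hw.comp hT).aemeasurable).symm
    _ = ∫⁻ x, w x ∂((ν.prod τ).map T) := (lintegral_map hw hT).symm
    _ = ∫⁻ x, w x ∂(Measure.addHaarScalarFactor ((ν.prod τ).map T) μ • μ) :=
        congrArg (fun m ↦ ∫⁻ x, w x ∂m) (Measure.isAddLeftInvariant_eq_smul _ μ)
    _ = _ := lintegral_smul_measure _ _

theorem exists_lintegral_lintegral_line_le (μ : Measure E) [μ.IsAddHaarMeasure] {D : E →L[ℝ] ℝ}
    {v : E} (hDv : D v = 1) {S : Set E} {K : ℝ≥0}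
    (hK : AntilipschitzWith K (S.domRestrict fun x ↦ x - D x • v)) :
    ∃ C : ℝ≥0, ∀ w : E → ℝ≥0∞, Measurable w →
      ∫⁻ x in S, (∫⁻ s : ℝ, w (x - s • v)) ∂μH[(finrank ℝ E : ℝ) - 1] ≤ C * ∫⁻ x, w x ∂μ := by
  have right_inv : Function.RightInverse (ContinuousLinearMap.toSpanSingleton ℝ v) D :=
    fun t ↦ by simp [hDv]
  let π : E →L[ℝ] D.ker := D.projKerOfRightInverse _ right_inv
  let T : (D.ker × ℝ) ≃L[ℝ] E :=
    (ContinuousLinearEquiv.prodComm ℝ _ _).trans (.symm (.equivOfRightInverse D _ right_inv))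
  have T_apply (z : D.ker) (t : ℝ) : T (z, t) = t • v + z := by simp [T]
  have finrank_ker : (finrank ℝ E : ℝ) - 1 = finrank ℝ D.ker := by
    have hD : (D : E →ₗ[ℝ] ℝ) ≠ 0 := fun h ↦ by simpa [hDv] using DFunLike.congr_fun h v
    rw [← Module.Dual.finrank_ker_add_one_of_ne_zero hD]; simp
  obtain ⟨c, hc⟩ := exists_lintegral_lintegral_comp_equiv_eq μ μH[finrank ℝ D.ker] volume T
  refine ⟨K ^ finrank ℝ D.ker * c, fun w hw ↦ ?_⟩
  have hwT : Measurable fun z : D.ker × ℝ ↦ w (T z) := hw.comp T.continuous.measurable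
  have line_eq (x : E) : ∫⁻ s : ℝ, w (x - s • v) = ∫⁻ t : ℝ, w (T (π x, t)) :=
    calc ∫⁻ s : ℝ, w (x - s • v) = ∫⁻ s : ℝ, w (T (π x, D x - s)) := by
          congr! 3 with s; simp only [T_apply, π]; simp [sub_smul]
      _ = _ := lintegral_sub_left_eq_self (fun t ↦ w (T (π x, t))) (D x)
  rw [finrank_ker]
  calc ∫⁻ x in S, (∫⁻ s : ℝ, w (x - s • v)) ∂μH[finrank ℝ D.ker]
      = ∫⁻ z, (∫⁻ t : ℝ, w (T (z, t))) ∂((μH[finrank ℝ D.ker].restrict S).map π) := by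
        rw [lintegral_map hwT.lintegral_prod_right' π.continuous.measurable]
        simp only [line_eq]
    _ ≤ ∫⁻ z, (∫⁻ t : ℝ, w (T (z, t)))
          ∂((K : ℝ≥0∞) ^ (finrank ℝ D.ker : ℝ) • μH[finrank ℝ D.ker]) :=
        lintegral_mono' (map_restrict_hausdorffMeasure_le π.continuous.measurable hK
          (Nat.cast_nonneg _)) le_rfl
    _ = (K ^ finrank ℝ D.ker * c : ℝ≥0) * ∫⁻ x, w x ∂μ := by
        rw [lintegral_smul_measure, hc w hw, ENNReal.rpow_natCast, smul_eq_mul]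
        push_cast
        ring

end Projection

section LevelSet

variable {E : Type*} [NormedAddCommGroup E] [NormedSpace ℝ E] {ρ : E → ℝ} {p v : E}
  {D : E →L[ℝ] ℝ}

theorem exists_antilipschitzWith_projection_levelSet (hρ : HasStrictFDerivAt ρ D p) (v : E)
    (a : ℝ) :
    ∃ U ∈ 𝓝 p, AntilipschitzWith 2 ((U ∩ ρ ⁻¹' {a}).domRestrict fun x ↦ x - D x • v) := by
  have approx := hρ.isLittleO.def (c := (2 * (‖v‖ + 1))⁻¹) (by positivity)
  rw [nhds_prod_eq] at approx
  obtain ⟨U, hU, approx_U⟩ := mem_prod_same_iff.1 approx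
  refine ⟨U, hU, AntilipschitzWith.of_le_mul_dist ?_⟩
  rintro ⟨x, hxU, rfl⟩ ⟨y, hyU, hxy⟩
  have hD : |D (x - y)| ≤ (2 * (‖v‖ + 1))⁻¹ * ‖x - y‖ := by
    simpa [show ρ y = ρ x from hxy, abs_sub_comm (D y)] using approx_U (mk_mem_prod hxU hyU)
  have hDv : |D (x - y)| * ‖v‖ ≤ ‖x - y‖ / 2 :=
    calc |D (x - y)| * ‖v‖ ≤ (2 * (‖v‖ + 1))⁻¹ * ‖x - y‖ * (‖v‖ + 1) := by
          gcongr; exact (lt_add_one _).le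
      _ = ‖x - y‖ / 2 := by field_simp
  have decomp : x - y = (x - D x • v - (y - D y • v)) + D (x - y) • v := by
    rw [map_sub, sub_smul]; abel
  have := norm_add_le (x - D x • v - (y - D y • v)) (D (x - y) • v)
  rw [← decomp, norm_smul, Real.norm_eq_abs] at this
  simp only [Subtype.dist_eq, dist_eq_norm, domRestrict_apply, NNReal.coe_ofNat]
  linarith

theorem eventually_sub_smul_lt (hρ : HasStrictFDerivAt ρ D p) (hv : 0 < D v) :
    ∀ᶠ q : E × ℝ in 𝓝 p ×ˢ 𝓝[>] 0, ρ (q.1 - q.2 • v) < ρ q.1 := by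
  have line_tendsto : Tendsto (fun q : E × ℝ ↦ (q.1 - q.2 • v, q.1)) (𝓝 p ×ˢ 𝓝[>] 0)
      (𝓝 (p, p)) := by
    have : Continuous fun q : E × ℝ ↦ (q.1 - q.2 • v, q.1) := by fun_prop
    refine (this.tendsto' (p, 0) (p, p) (by simp)).mono_left ?_
    rw [nhds_prod_eq]
    exact prod_mono le_rfl nhdsWithin_le_nhds
  have hs : ∀ᶠ q : E × ℝ in 𝓝 p ×ˢ 𝓝[>] 0, 0 < q.2 :=
    tendsto_snd.eventually self_mem_nhdsWithin
  have hv0 : 0 < ‖v‖ := norm_pos_iff.2 fun h ↦ by simp [h] at hv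
  filter_upwards [line_tendsto.eventually (hρ.isLittleO.def (c := D v / (2 * ‖v‖)) (by positivity)),
    hs] with ⟨x, s⟩ approx hs
  dsimp only at approx hs ⊢
  rw [sub_sub_cancel_left] at approx
  have bound : D v / (2 * ‖v‖) * ‖-(s • v)‖ = s * D v / 2 := by
    rw [norm_neg, norm_smul, Real.norm_of_nonneg hs.le]; field_simp
  rw [bound, Real.norm_eq_abs, map_neg, map_smul, smul_eq_mul] at approx
  nlinarith [le_abs_self (ρ (x - s • v) - ρ x - -(s * D v)), mul_pos hs hv]

end LevelSet

section DirectionalTrace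

variable {E : Type*} [NormedAddCommGroup E] [NormedSpace ℝ E] [MeasurableSpace E]

/-- Interpolated trace inequality for the derivative in the direction `v`: the integral of
`(∂u/∂v)²` over `S` is controlled by the weight `ε⁻³ u² + ε |D²u|²` on `Ω`, uniformly in the
scale `ε ≤ 1` and in the `C²` function `u`. Stated with lower integrals, so that it can be glued
along covers of `S` before any integrability is known. -/
def DirectionalTraceBound (σ μ : Measure E) (Ω S : Set E) (v : E) : Prop :=
  ∃ C : ℝ≥0, ∀ u : E → ℝ, ContDiff ℝ 2 u → ∀ ε ∈ Ioc (0 : ℝ) 1,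
    ∫⁻ x in S, ENNReal.ofReal (fderiv ℝ u x v ^ 2) ∂σ
      ≤ C * ∫⁻ x in Ω, ENNReal.ofReal (interpolationWeight ε u x) ∂μ

namespace DirectionalTraceBound

variable {σ μ : Measure E} {Ω S S' : Set E} {v w : E}

theorem empty : DirectionalTraceBound σ μ Ω ∅ v := ⟨0, by simp⟩

theorem mono (h : DirectionalTraceBound σ μ Ω S' v) (hS : S ⊆ S') :
    DirectionalTraceBound σ μ Ω S v :=
  let ⟨C, hC⟩ := h
  ⟨C, fun u hu ε hε ↦ (lintegral_mono_set hS).trans (hC u hu ε hε)⟩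

theorem union (h : DirectionalTraceBound σ μ Ω S v) (h' : DirectionalTraceBound σ μ Ω S' v) :
    DirectionalTraceBound σ μ Ω (S ∪ S') v := by
  obtain ⟨C, hC⟩ := h
  obtain ⟨C', hC'⟩ := h'
  refine ⟨C + C', fun u hu ε hε ↦ (lintegral_union_le _ _ _).trans ?_⟩
  rw [ENNReal.coe_add, add_mul]
  exact add_le_add (hC u hu ε hε) (hC' u hu ε hε)

theorem smul (h : DirectionalTraceBound σ μ Ω S v) (c : ℝ) :
    DirectionalTraceBound σ μ Ω S (c • v) := by
  obtain ⟨C, hC⟩ := h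
  refine ⟨(c ^ 2).toNNReal * C, fun u hu ε hε ↦ ?_⟩
  simp only [map_smul, smul_eq_mul, mul_pow, ENNReal.ofReal_mul (sq_nonneg c)]
  rw [lintegral_const_mul' _ _ ENNReal.ofReal_ne_top, ENNReal.coe_mul, mul_assoc]
  exact mul_le_mul_right (hC u hu ε hε) _

theorem add [OpensMeasurableSpace E] (hv : DirectionalTraceBound σ μ Ω S v)
    (hw : DirectionalTraceBound σ μ Ω S w) : DirectionalTraceBound σ μ Ω S (v + w) := by
  obtain ⟨C, hC⟩ := hv
  obtain ⟨C', hC'⟩ := hw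
  refine ⟨2 * (C + C'), fun u hu ε hε ↦ ?_⟩
  have := hu.continuous_fderiv two_ne_zero
  have pointwise (x : E) : ENNReal.ofReal (fderiv ℝ u x (v + w) ^ 2)
      ≤ 2 * (ENNReal.ofReal (fderiv ℝ u x v ^ 2) + ENNReal.ofReal (fderiv ℝ u x w ^ 2)) := by
    rw [← ENNReal.ofReal_add (sq_nonneg _) (sq_nonneg _), ← ENNReal.ofReal_ofNat 2,
      ← ENNReal.ofReal_mul zero_le_two, map_add]
    exact ENNReal.ofReal_le_ofReal add_sq_le
  calc ∫⁻ x in S, ENNReal.ofReal (fderiv ℝ u x (v + w) ^ 2) ∂σ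
      ≤ 2 * (∫⁻ x in S, ENNReal.ofReal (fderiv ℝ u x v ^ 2) ∂σ
          + ∫⁻ x in S, ENNReal.ofReal (fderiv ℝ u x w ^ 2) ∂σ) := by
        rw [← lintegral_add_left (Measurable.ennreal_ofReal (Continuous.measurable (by fun_prop))),
          ← lintegral_const_mul' _ _ ENNReal.ofNat_ne_top]
        exact lintegral_mono pointwise
    _ ≤ 2 * (C * ∫⁻ x in Ω, ENNReal.ofReal (interpolationWeight ε u x) ∂μ
          + C' * ∫⁻ x in Ω, ENNReal.ofReal (interpolationWeight ε u x) ∂μ) := by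
        gcongr
        exacts [hC u hu ε hε, hC' u hu ε hε]
    _ = _ := by push_cast; ring

end DirectionalTraceBound

variable [FiniteDimensional ℝ E] [BorelSpace E] (μ : Measure E) [μ.IsAddHaarMeasure] {Ω : Set E}
  {ρ : E → ℝ}

theorem exists_mem_nhds_directionalTraceBound_of_apply_eq_one {D : E →L[ℝ] ℝ} {p v : E}
    (hρ : HasStrictFDerivAt ρ D p) (hv : D v = 1) (hΩ : MeasurableSet Ω) {a : ℝ}
    (hlt : {x | ρ x < a} ⊆ Ω) :
    ∃ U ∈ 𝓝 p, DirectionalTraceBound μH[(finrank ℝ E : ℝ) - 1] μ Ω (U ∩ ρ ⁻¹' {a}) v := by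
  obtain ⟨U, hU, projection⟩ := exists_antilipschitzWith_projection_levelSet hρ v a
  obtain ⟨V, hV, I, hI, inward⟩ :=
    eventually_prod_iff.1 (eventually_sub_smul_lt hρ (hv ▸ one_pos))
  obtain ⟨δ, hδ, hδI⟩ := mem_nhdsGT_iff_exists_Ioc_subset.1 hI
  obtain ⟨C, hC⟩ := exists_lintegral_lintegral_line_le μ hv projection
  refine ⟨U ∩ {x | V x}, inter_mem hU hV, (72 / δ ^ 3 + 2 * δ * ‖v‖ ^ 4).toNNReal * C,
    fun u hu ε hε ↦ ?_⟩
  let w : E → ℝ≥0∞ := Ω.indicator fun y ↦ ENNReal.ofReal (interpolationWeight ε u y)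
  have hw : Measurable w :=
    (continuous_interpolationWeight hu ε).measurable.ennreal_ofReal.indicator hΩ
  have hw_line : Measurable fun q : E × ℝ ↦ w (q.1 - q.2 • v) :=
    hw.comp (Continuous.measurable (by fun_prop))
  let σ : Measure E := μH[(finrank ℝ E : ℝ) - 1]
  let M : ℝ≥0∞ := ENNReal.ofReal (72 / δ ^ 3 + 2 * δ * ‖v‖ ^ 4)
  calc ∫⁻ x in U ∩ {x | V x} ∩ ρ ⁻¹' {a}, ENNReal.ofReal (fderiv ℝ u x v ^ 2) ∂σ
      ≤ ∫⁻ x in U ∩ {x | V x} ∩ ρ ⁻¹' {a}, M * (∫⁻ s : ℝ, w (x - s • v)) ∂σ :=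
        setLIntegral_mono (hw_line.lintegral_prod_right'.const_mul M) fun x hx ↦
          ofReal_sq_fderiv_apply_le_lintegral_indicator hu hδ
            (fun s hs ↦ hlt ((inward hx.1.2 (hδI hs)).trans_eq hx.2)) hε
    _ ≤ M * ∫⁻ x in U ∩ ρ ⁻¹' {a}, (∫⁻ s : ℝ, w (x - s • v)) ∂σ := by
        rw [lintegral_const_mul' _ _ ENNReal.ofReal_ne_top]
        gcongr
        exact inter_subset_left
    _ ≤ M * (C * ∫⁻ x, w x ∂μ) := by gcongr; exact hC w hw
    _ = _ := by rw [lintegral_indicator hΩ, ENNReal.coe_mul]; exact (mul_assoc _ _ _).symm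

theorem exists_mem_nhds_directionalTraceBound {D : E →L[ℝ] ℝ} {p : E}
    (hρ : HasStrictFDerivAt ρ D p) (hD : D ≠ 0) (hΩ : MeasurableSet Ω) {a : ℝ}
    (hlt : {x | ρ x < a} ⊆ Ω) (w : E) :
    ∃ U ∈ 𝓝 p, DirectionalTraceBound μH[(finrank ℝ E : ℝ) - 1] μ Ω (U ∩ ρ ⁻¹' {a}) w := by
  obtain ⟨v, hv⟩ : ∃ v, D v = 1 := by
    obtain ⟨v₀, hv₀⟩ := DFunLike.ne_iff.1 hD
    exact ⟨(D v₀)⁻¹ • v₀, by simpa using inv_mul_cancel₀ hv₀⟩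
  obtain ⟨U, hU, bound_v⟩ :=
    exists_mem_nhds_directionalTraceBound_of_apply_eq_one μ hρ hv hΩ hlt
  obtain ⟨U', hU', bound_v'⟩ := exists_mem_nhds_directionalTraceBound_of_apply_eq_one μ hρ
    (v := w + (1 - D w) • v) (by simp [hv]) hΩ hlt
  -- The hyperplane `{D = 1}` spans `E`.
  have decomp : w = (w + (1 - D w) • v) + (D w - 1) • v := by module
  refine ⟨U ∩ U', inter_mem hU hU', ?_⟩
  rw [decomp]
  exact (bound_v'.mono (by gcongr; exact inter_subset_right)).add
    ((bound_v.mono (by gcongr; exact inter_subset_left)).smul _)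

theorem directionalTraceBound_frontier (hΩbd : Bornology.IsBounded Ω) (hρ : ContDiff ℝ 1 ρ)
    {a : ℝ} (hΩ : Ω = {x | ρ x < a}) (hreg : ∀ x ∈ frontier Ω, fderiv ℝ ρ x ≠ 0) (v : E) :
    DirectionalTraceBound μH[(finrank ℝ E : ℝ) - 1] μ Ω (frontier Ω) v := by
  have hΩ_meas : MeasurableSet Ω := hΩ ▸ (isOpen_lt hρ.continuous continuous_const).measurableSet
  have frontier_subset : frontier Ω ⊆ ρ ⁻¹' {a} :=
    hΩ ▸ frontier_lt_subset_eq hρ.continuous continuous_const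
  have compact_frontier : IsCompact (frontier Ω) :=
    hΩbd.isCompact_closure.of_isClosed_subset isClosed_frontier frontier_subset_closure
  refine compact_frontier.induction_on .empty (fun s t hst ht ↦ ht.mono hst)
    (fun s t hs ht ↦ hs.union ht) fun p hp ↦ ?_
  obtain ⟨U, hU, bound⟩ := exists_mem_nhds_directionalTraceBound μ
    (hρ.contDiffAt.hasStrictFDerivAt one_ne_zero) (hreg p hp) hΩ_meas hΩ.ge v
  exact ⟨U ∩ ρ ⁻¹' {a}, inter_mem (mem_nhdsWithin_of_mem_nhds hU)
    (mem_of_superset self_mem_nhdsWithin frontier_subset), bound⟩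

end DirectionalTrace

section Optimization

theorem le_two_mul_of_forall_scale_quartic {I C a b : ℝ} (ha : 0 ≤ a) (hab : a ≤ b)
    (h : ∀ ε ∈ Ioc (0 : ℝ) 1, I ≤ C * (ε⁻¹ ^ 3 * a ^ 4 + ε * b ^ 4)) :
    I ≤ 2 * C * (b ^ 3 * a) := by
  rcases ha.eq_or_lt with rfl | ha
  · have bound_cont : Continuous fun ε : ℝ ↦ C * (ε⁻¹ ^ 3 * 0 ^ 4 + ε * b ^ 4) := by
      simp only [ne_eq, OfNat.ofNat_ne_zero, not_false_eq_true, zero_pow, mul_zero]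
      fun_prop
    have bound_tendsto := bound_cont.tendsto' 0 (2 * C * (b ^ 3 * 0)) (by simp)
    exact ge_of_tendsto (bound_tendsto.mono_left nhdsWithin_le_nhds)
      (mem_of_superset (Ioc_mem_nhdsGT one_pos) h)
  · have hb : 0 < b := ha.trans_le hab
    calc I ≤ C * ((a / b)⁻¹ ^ 3 * a ^ 4 + a / b * b ^ 4) :=
          h _ ⟨by positivity, (div_le_one hb).2 hab⟩
      _ = 2 * C * (b ^ 3 * a) := by field_simp; ring

theorem le_two_mul_of_forall_scale {I C A B : ℝ} (hA : 0 ≤ A) (hAB : A ≤ B)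
    (h : ∀ ε ∈ Ioc (0 : ℝ) 1, I ≤ C * (ε⁻¹ ^ 3 * A + ε * B)) :
    I ≤ 2 * C * (√B ^ (3 / 2 : ℝ) * √A ^ (1 / 2 : ℝ)) := by
  have sqrt_sqrt_pow {x : ℝ} (hx : 0 ≤ x) : √√x ^ 4 = x := by
    rw [pow_mul _ 2 2, Real.sq_sqrt (Real.sqrt_nonneg x), Real.sq_sqrt hx]
  rw [← Real.sqrt_eq_rpow, Real.rpow_div_two_eq_sqrt _ (Real.sqrt_nonneg B), Real.rpow_ofNat]
  refine le_two_mul_of_forall_scale_quartic (Real.sqrt_nonneg _)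
    (Real.sqrt_le_sqrt (Real.sqrt_le_sqrt hAB)) ?_
  simpa only [sqrt_sqrt_pow hA, sqrt_sqrt_pow (hA.trans hAB)] using h

end Optimization

section GradientTrace

theorem integrableOn_of_continuous_of_isBounded {X F : Type*} [MetricSpace X] [ProperSpace X]
    [MeasurableSpace X] [OpensMeasurableSpace X] [NormedAddCommGroup F] {μ : Measure X}
    [IsFiniteMeasureOnCompacts μ] {f : X → F} (hf : Continuous f) {s : Set X}
    (hs : Bornology.IsBounded s) : IntegrableOn f s μ :=
  (hf.continuousOn.integrableOn_compact hs.isCompact_closure).mono_set subset_closure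

variable {d : ℕ} {u : (Fin d → ℝ) → ℝ}

theorem norm_iteratedFDeriv_sq_le_sobSq {n k : ℕ} (hn : n ≤ k) (u : (Fin d → ℝ) → ℝ)
    (x : Fin d → ℝ) : ‖iteratedFDeriv ℝ n u x‖ ^ 2 ≤ sobSq k u x :=
  Finset.single_le_sum (f := fun n ↦ ‖iteratedFDeriv ℝ n u x‖ ^ 2) (fun _ _ ↦ sq_nonneg _)
    (Finset.mem_range_succ_iff.2 hn)

theorem sq_le_sobSq (k : ℕ) (u : (Fin d → ℝ) → ℝ) (x : Fin d → ℝ) : u x ^ 2 ≤ sobSq k u x := by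
  simpa using norm_iteratedFDeriv_sq_le_sobSq k.zero_le u x

theorem continuous_sobSq {k : ℕ} (hu : ContDiff ℝ k u) : Continuous (sobSq k u) :=
  continuous_finsetSum _ fun _ hn ↦ ((hu.continuous_iteratedFDeriv
    (by exact_mod_cast Finset.mem_range_succ_iff.1 hn)).norm.pow 2)

theorem continuous_gnsq (hu : ContDiff ℝ 1 u) : Continuous (gnsq u) := by
  have := hu.continuous_fderiv one_ne_zero
  unfold gnsq pd
  fun_prop

theorem gnsq_nonneg (u : (Fin d → ℝ) → ℝ) (x : Fin d → ℝ) : 0 ≤ gnsq u x :=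
  Finset.sum_nonneg fun _ _ ↦ sq_nonneg _

theorem sq_sum_pd_mul_div_sqrt_nsq_le (u : (Fin d → ℝ) → ℝ) (x v : Fin d → ℝ) :
    (∑ i, pd i u x * (v i / √(nsq v))) ^ 2 ≤ gnsq u x := by
  have hv : 0 ≤ nsq v := Finset.sum_nonneg fun _ _ ↦ sq_nonneg _
  calc (∑ i, pd i u x * (v i / √(nsq v))) ^ 2 ≤ gnsq u x * ∑ i, (v i / √(nsq v)) ^ 2 :=
        Finset.sum_mul_sq_le_sq_mul_sq _ _ _
    _ = gnsq u x * (nsq v / nsq v) := by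
        simp only [div_pow, Real.sq_sqrt hv, ← Finset.sum_div]; rfl
    _ ≤ gnsq u x := mul_le_of_le_one_right (gnsq_nonneg u x) (div_self_le_one _)

theorem lintegral_gnsq_eq_sum (hu : ContDiff ℝ 1 u) (σ : Measure (Fin d → ℝ)) :
    ∫⁻ x, ENNReal.ofReal (gnsq u x) ∂σ
      = ∑ i, ∫⁻ x, ENNReal.ofReal (fderiv ℝ u x (Pi.single i 1) ^ 2) ∂σ := by
  have := hu.continuous_fderiv one_ne_zero
  rw [← lintegral_finsetSum _ fun i _ ↦
    Measurable.ennreal_ofReal (Continuous.measurable (by fun_prop))]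
  simp only [gnsq, pd, ENNReal.ofReal_sum_of_nonneg fun _ _ ↦ sq_nonneg _]

variable {Ω : Set (Fin d → ℝ)}

theorem lintegral_interpolationWeight_le (hΩ : Bornology.IsBounded Ω) (hu : ContDiff ℝ 2 u)
    {ε : ℝ} (hε : 0 ≤ ε) :
    ∫⁻ x in Ω, ENNReal.ofReal (interpolationWeight ε u x)
      ≤ ENNReal.ofReal (ε⁻¹ ^ 3 * (∫ x in Ω, u x ^ 2) + ε * ∫ x in Ω, sobSq 2 u x) := by
  have weight_int : IntegrableOn (interpolationWeight ε u) Ω :=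
    integrableOn_of_continuous_of_isBounded (continuous_interpolationWeight hu ε) hΩ
  have sq_int : IntegrableOn (fun x ↦ ε⁻¹ ^ 3 * u x ^ 2) Ω :=
    (integrableOn_of_continuous_of_isBounded (hu.continuous.pow 2) hΩ).const_mul _
  have sob_int : IntegrableOn (fun x ↦ ε * sobSq 2 u x) Ω :=
    (integrableOn_of_continuous_of_isBounded (continuous_sobSq hu) hΩ).const_mul _
  rw [← ofReal_integral_eq_lintegral_ofReal weight_int
    (ae_of_all _ (interpolationWeight_nonneg hε u)), ← integral_const_mul, ← integral_const_mul,
    ← integral_add sq_int sob_int]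
  refine ENNReal.ofReal_le_ofReal (integral_mono weight_int (sq_int.add sob_int) fun x ↦ ?_)
  dsimp only [interpolationWeight]
  gcongr
  exact norm_iteratedFDeriv_sq_le_sobSq le_rfl u x

theorem exists_lintegral_gnsq_frontier_le (hΩbd : Bornology.IsBounded Ω)
    {ρ : (Fin d → ℝ) → ℝ} (hρ : ContDiff ℝ 1 ρ) (hΩ : Ω = {x | ρ x < 0})
    (hreg : ∀ x ∈ frontier Ω, grad ρ x ≠ 0) :
    ∃ C : ℝ≥0, ∀ u : (Fin d → ℝ) → ℝ, ContDiff ℝ 2 u →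
      ∀ ε ∈ Ioc (0 : ℝ) 1, ∫⁻ x in frontier Ω, ENNReal.ofReal (gnsq u x) ∂μH[(d : ℝ) - 1]
        ≤ ENNReal.ofReal (C * (ε⁻¹ ^ 3 * (∫ x in Ω, u x ^ 2) + ε * ∫ x in Ω, sobSq 2 u x)) := by
  have fderiv_ne_zero : ∀ x ∈ frontier Ω, fderiv ℝ ρ x ≠ 0 := fun x hx h ↦
    hreg x hx (by ext i; simp [grad, pd, h])
  choose C hC using fun i ↦
    directionalTraceBound_frontier volume hΩbd hρ hΩ fderiv_ne_zero (Pi.single i 1)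
  rw [Module.finrank_fin_fun] at hC
  refine ⟨∑ i, C i, fun u hu ε hε ↦ ?_⟩
  rw [lintegral_gnsq_eq_sum (hu.of_le one_le_two), ENNReal.ofReal_mul (by positivity),
    ENNReal.ofReal_coe_nnreal, ENNReal.ofNNReal_finsetSum, Finset.sum_mul]
  gcongr with i
  exact (hC i u hu ε hε).trans (by gcongr; exact lintegral_interpolationWeight_le hΩbd hu hε.1.le)

theorem exists_integral_gnsq_frontier_le (hΩbd : Bornology.IsBounded Ω)
    {ρ : (Fin d → ℝ) → ℝ} (hρ : ContDiff ℝ 1 ρ) (hΩ : Ω = {x | ρ x < 0})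
    (hreg : ∀ x ∈ frontier Ω, grad ρ x ≠ 0) :
    ∃ C > (0 : ℝ), ∀ u : (Fin d → ℝ) → ℝ, ContDiff ℝ 2 u →
      IntegrableOn (gnsq u) (frontier Ω) μH[(d : ℝ) - 1] ∧
      ∫ x in frontier Ω, gnsq u x ∂μH[(d : ℝ) - 1]
        ≤ C * √(∫ x in Ω, sobSq 2 u x) ^ (3 / 2 : ℝ) * √(∫ x in Ω, u x ^ 2) ^ (1 / 2 : ℝ) := by
  obtain ⟨C, hC⟩ := exists_lintegral_gnsq_frontier_le hΩbd hρ hΩ hreg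
  refine ⟨2 * (C + 1), by positivity, fun u hu ↦ ?_⟩
  have integrable : IntegrableOn (gnsq u) (frontier Ω) μH[(d : ℝ) - 1] := by
    refine ⟨(continuous_gnsq (hu.of_le one_le_two)).aestronglyMeasurable, ?_⟩
    rw [hasFiniteIntegral_iff_ofReal (ae_of_all _ (gnsq_nonneg u))]
    exact (hC u hu 1 ⟨one_pos, le_rfl⟩).trans_lt ENNReal.ofReal_lt_top
  have L2_nonneg : 0 ≤ ∫ x in Ω, u x ^ 2 := integral_nonneg fun _ ↦ sq_nonneg _
  have L2_le_H2 : ∫ x in Ω, u x ^ 2 ≤ ∫ x in Ω, sobSq 2 u x :=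
    integral_mono (integrableOn_of_continuous_of_isBounded (hu.continuous.pow 2) hΩbd)
      (integrableOn_of_continuous_of_isBounded (continuous_sobSq hu) hΩbd) (sq_le_sobSq 2 u)
  refine ⟨integrable, ?_⟩
  rw [mul_assoc]
  refine le_two_mul_of_forall_scale L2_nonneg L2_le_H2 fun ε hε ↦ ?_
  have hε0 := hε.1
  have H2_nonneg := L2_nonneg.trans L2_le_H2
  refine le_trans (b := C * (ε⁻¹ ^ 3 * (∫ x in Ω, u x ^ 2) + ε * ∫ x in Ω, sobSq 2 u x)) ?_ ?_
  · rw [← ENNReal.ofReal_le_ofReal_iff (by positivity),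
      ofReal_integral_eq_lintegral_ofReal integrable (ae_of_all _ (gnsq_nonneg u))]
    exact hC u hu ε hε
  · gcongr; exact (lt_add_one _).le

end GradientTrace

theorem trace_interpolation_normal_derivative_general (d : ℕ) (Ω : Set (Fin d → ℝ))
    (hΩbd : Bornology.IsBounded Ω) (ρ : (Fin d → ℝ) → ℝ) (hρ : ContDiff ℝ 1 ρ)
    (hΩdef : Ω = {x | ρ x < 0}) (hρreg : ∀ x ∈ frontier Ω, grad ρ x ≠ 0) :
    ∃ C > (0:ℝ), ∀ u : (Fin d → ℝ) → ℝ, ContDiff ℝ 2 u →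
      (∫ x in frontier Ω,
          (∑ i, pd i u x * (grad ρ x i / Real.sqrt (nsq (grad ρ x)))) ^ 2
          ∂(μH[(d : ℝ) - 1]))
        ≤ C * (Real.sqrt (∫ x in Ω, sobSq 2 u x)) ^ ((3:ℝ)/2)
            * (Real.sqrt (∫ x in Ω, (u x) ^ 2)) ^ ((1:ℝ)/2) := by
  obtain ⟨C, hC, gradient_bound⟩ := exists_integral_gnsq_frontier_le hΩbd hρ hΩdef hρreg
  refine ⟨C, hC, fun u hu ↦ ?_⟩
  obtain ⟨integrable, bound⟩ := gradient_bound u hu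
  exact (integral_mono_of_nonneg (ae_of_all _ fun _ ↦ sq_nonneg _) integrable
    (ae_of_all _ fun x ↦ sq_sum_pd_mul_div_sqrt_nsq_le u x (grad ρ x))).trans bound

/-- interpolation trace lemma for the normal derivative.
The smooth bounded domain is described by a smooth defining function `ρ`
(`Ω = {ρ < 0}` with `∇ρ ≠ 0` on the boundary), the outward unit normal is
`ν = ∇ρ/|∇ρ|`, and the surface measure on `∂Ω` is the `(d−1)`-dimensional
Hausdorff measure. -/
theorem trace_interpolation_normal_derivative
    (d : ℕ) (hd : 0 < d)
    (Ω : Set (Fin d → ℝ)) (hΩbd : Bornology.IsBounded Ω)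
    (ρ : (Fin d → ℝ) → ℝ) (hρ : ContDiff ℝ (⊤ : ℕ∞) ρ)
    (hΩdef : Ω = {x | ρ x < 0})
    (hρreg : ∀ x ∈ frontier Ω, grad ρ x ≠ 0) :
    ∃ C > (0:ℝ), ∀ u : (Fin d → ℝ) → ℝ, ContDiff ℝ 2 u →
      (∫ x in frontier Ω,
          (∑ i, pd i u x * (grad ρ x i / Real.sqrt (nsq (grad ρ x)))) ^ 2
          ∂(μH[(d : ℝ) - 1]))
        ≤ C * (Real.sqrt (∫ x in Ω, sobSq 2 u x)) ^ ((3:ℝ)/2)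
            * (Real.sqrt (∫ x in Ω, (u x) ^ 2)) ^ ((1:ℝ)/2) := by
  exact trace_interpolation_normal_derivative_general d Ω hΩbd ρ (hρ.of_le (by simp)) hΩdef hρreg
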